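/- Let p be a prime, r ≥ 1, and let C be a free convolutional code of length n and rank k over ℤ/p^r with dual code C⊥. Then C is catastrophic (i.e., every full-row-rank polynomial generator matrix of C over (ℤ/p^r)[D] admits an input u of infinite Hamming weight whose output u·G has finite Hamming weight) if and only if C⊥ is catastrophic. -/

import Mathlib

open Polynomial Matrix

/-- The natural ring homomorphism from polynomials over a commutative ring to Laurent series. -/
noncomputable def polyToLS (R : Type*) [CommRing R] : Polynomial R →+* LaurentSeries R :=
  (HahnSeries.ofPowerSeries ℤ R).comp Polynomial.coeToPowerSeries.ringHom

/-- The `k × k` minor of a `k × n` matrix determined by a choice of columns. -/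
noncomputable def minorOn {R : Type*} [CommRing R] {k n : ℕ}
    (G : Matrix (Fin k) (Fin n) R) (c : Fin k → Fin n) : R :=
  (G.submatrix id c).det

/-- A polynomial matrix has full row rank if some maximal minor is a non-zero-divisor. -/
def FullRowRank {R : Type*} [CommRing R] {k n : ℕ}
    (G : Matrix (Fin k) (Fin n) (Polynomial R)) : Prop :=
  ∃ c : Fin k → Fin n, minorOn G c ∈ nonZeroDivisors (Polynomial R)

/-- The free convolutional code (row span over the Laurent series ring) generated by `G`. -/
noncomputable def code {R : Type*} [CommRing R] {k n : ℕ}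
    (G : Matrix (Fin k) (Fin n) (Polynomial R)) : Set (Fin n → LaurentSeries R) :=
  {v | ∃ u : Fin k → LaurentSeries R, v = Matrix.vecMul u (G.map (polyToLS R))}

/-- The internal degree of a polynomial matrix: the maximal degree of its maximal minors. -/
noncomputable def intdeg {R : Type*} [CommRing R] {k n : ℕ}
    (G : Matrix (Fin k) (Fin n) (Polynomial R)) : WithBot ℕ :=
  Finset.univ.sup fun c : Fin k → Fin n => (minorOn G c).degree

/-- Coefficientwise/entrywise reduction modulo `p` of a matrix over `(ℤ/p^r)[D]`. -/
noncomputable def reduceMod (p r : ℕ) (hr : r ≠ 0) {k n : ℕ}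
    (G : Matrix (Fin k) (Fin n) (Polynomial (ZMod (p ^ r)))) :
    Matrix (Fin k) (Fin n) (Polynomial (ZMod p)) :=
  G.map (Polynomial.map (ZMod.castHom (dvd_pow_self p hr) (ZMod p)))

/-- The monic greatest common divisor in `𝔽_p[D]` of the maximal minors of a matrix. -/
noncomputable def gcdMinors {p : ℕ} [Fact p.Prime] {k n : ℕ}
    (G : Matrix (Fin k) (Fin n) (Polynomial (ZMod p))) : Polynomial (ZMod p) :=
  Finset.univ.gcd fun c : Fin k → Fin n => minorOn G c

/-- A vector of Laurent series has finite Hamming weight iff each component has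
finitely many nonzero coefficients. -/
def FiniteWeight {R : Type*} [CommRing R] {m : ℕ} (v : Fin m → LaurentSeries R) : Prop :=
  ∀ i, (v i).support.Finite

/-- A polynomial generator matrix is non-catastrophic if every input whose output has finite
Hamming weight itself has finite Hamming weight. -/
noncomputable def NonCatastrophic {R : Type*} [CommRing R] {k n : ℕ}
    (G : Matrix (Fin k) (Fin n) (Polynomial R)) : Prop :=
  ∀ u : Fin k → LaurentSeries R,
    FiniteWeight (Matrix.vecMul u (G.map (polyToLS R))) → FiniteWeight u

/-- The dual of a set of words: all vectors orthogonal to every word. -/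
def dualCode {R : Type*} [CommRing R] {n : ℕ}
    (C : Set (Fin n → LaurentSeries R)) : Set (Fin n → LaurentSeries R) :=
  {v | ∀ w ∈ C, ∑ i, v i * w i = 0}


/-- A code is catastrophic if every full-row-rank polynomial generator matrix of it
admits an input of infinite Hamming weight whose output has finite Hamming weight. -/
noncomputable def CatastrophicCode {R : Type*} [CommRing R] {n : ℕ}
    (C : Set (Fin n → LaurentSeries R)) : Prop :=
  ∀ (m : ℕ) (G : Matrix (Fin m) (Fin n) (Polynomial R)),
    FullRowRank G → code G = C →
      ∃ u : Fin m → LaurentSeries R,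
        ¬ FiniteWeight u ∧ FiniteWeight (Matrix.vecMul u (G.map (polyToLS R)))


namespace CatDual

/-- The ring-theoretic facts about `R = ℤ/p^(s+1) → F = ℤ/p` that are used. -/
structure Chain {R F : Type*} [CommRing R] [Field F] (φ : R →+* F) (p : R) (s : ℕ) : Prop where
  surj : Function.Surjective φ
  ker : ∀ x, φ x = 0 → ∃ y, x = p * y
  map_p : φ p = 0
  pow_zero : p ^ (s + 1) = 0
  ann_p : ∀ x, p * x = 0 → ∃ y, x = p ^ s * y
  ann_pow : ∀ x, p ^ s * x = 0 → φ x = 0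

lemma Chain.isUnit {R F : Type*} [CommRing R] [Field F] {φ : R →+* F} {p : R} {s : ℕ}
    (h : Chain φ p s) (x : R) (hx : φ x ≠ 0) : IsUnit x := by
  obtain ⟨y, hy⟩ := h.surj (φ x)⁻¹
  obtain ⟨z, hz⟩ := h.ker (x * y - 1) (by simp [hy, hx])
  have h1 : IsNilpotent (x * y - 1) := ⟨s + 1, by rw [hz, mul_pow, h.pow_zero, zero_mul]⟩
  have h2 : IsUnit (x * y) := by
    have := IsNilpotent.isUnit_add_left_of_commute h1 isUnit_one (Commute.all _ _)
    simpa using this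
  exact isUnit_of_mul_isUnit_left h2

lemma Chain.pow_ne {R F : Type*} [CommRing R] [Field F] {φ : R →+* F} {p : R} {s : ℕ}
    (h : Chain φ p s) : p ^ s ≠ 0 := by
  intro h0
  have := h.ann_pow 1 (by simp [h0])
  simp at this

lemma chain_zmod (p s : ℕ) [Fact p.Prime] :
    Chain (ZMod.castHom (dvd_pow_self p (Nat.succ_ne_zero s)) (ZMod p))
      ((p : ℕ) : ZMod (p ^ (s + 1))) s := by
  have hp : 0 < p := (Fact.out : p.Prime).pos
  have : NeZero (p ^ (s + 1)) := ⟨(pow_pos hp _).ne'⟩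
  have key : ∀ x : ZMod (p ^ (s + 1)), ∃ a : ℕ, x = a := fun x => ⟨x.val, by simp⟩
  refine ⟨?_, ?_, ?_, ?_, ?_, ?_⟩
  · exact ZMod.castHom_surjective _
  · intro x hx
    obtain ⟨a, rfl⟩ := key x
    rw [map_natCast, ZMod.natCast_eq_zero_iff] at hx
    obtain ⟨b, rfl⟩ := hx
    exact ⟨b, by push_cast; rfl⟩
  · rw [map_natCast]; simp
  · rw [← Nat.cast_pow]; simp only [ZMod.natCast_self]
  · intro x hx
    obtain ⟨a, rfl⟩ := key x
    rw [← Nat.cast_mul, ZMod.natCast_eq_zero_iff, pow_succ'] at hx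
    obtain ⟨b, rfl⟩ := Nat.dvd_of_mul_dvd_mul_left hp hx
    exact ⟨b, by push_cast; rfl⟩
  · intro x hx
    obtain ⟨a, rfl⟩ := key x
    rw [← Nat.cast_pow, ← Nat.cast_mul, ZMod.natCast_eq_zero_iff, pow_succ] at hx
    rw [map_natCast, ZMod.natCast_eq_zero_iff]
    exact Nat.dvd_of_mul_dvd_mul_left (pow_pos hp s) hx

/-! ### Laurent polynomials inside Laurent series -/

open LaurentPolynomial in
/-- Embedding of Laurent polynomials into Laurent series. -/
noncomputable def emb (R : Type*) [CommRing R] : LaurentPolynomial R →+* LaurentSeries R :=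
  LaurentPolynomial.eval₂ HahnSeries.C
    ⟨HahnSeries.single 1 1, HahnSeries.single (-1) 1, by simp, by simp⟩

lemma unit_zpow (R : Type*) [CommRing R] (u : (LaurentSeries R)ˣ)
    (h1 : (u : LaurentSeries R) = HahnSeries.single 1 1)
    (h2 : ((u⁻¹ : (LaurentSeries R)ˣ) : LaurentSeries R) = HahnSeries.single (-1) 1) (n : ℤ) :
    ((u ^ n : (LaurentSeries R)ˣ) : LaurentSeries R) = HahnSeries.single n 1 := by
  induction n using Int.induction_on with
  | zero => simp
  | succ i ih => rw [_root_.zpow_add_one, Units.val_mul, ih, h1]; simp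
  | pred i ih => rw [_root_.zpow_sub_one, Units.val_mul, ih, h2]; simp [sub_eq_add_neg]

lemma coeff_emb {R : Type*} [CommRing R] (f : LaurentPolynomial R) (n : ℤ) :
    (emb R f).coeff n = f.coeff n := by
  induction f using LaurentPolynomial.induction_on' with
  | add p q hp hq => simp [hp, hq]
  | C_mul_T m a =>
    rw [emb, LaurentPolynomial.eval₂_C_mul_T, unit_zpow R _ rfl rfl,
      ← LaurentPolynomial.single_eq_C_mul_T]
    rw [HahnSeries.C_apply, HahnSeries.single_mul_single]
    rw [HahnSeries.coeff_single]
    rw [AddMonoidAlgebra.coeff_single, Finsupp.single_apply]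
    simp [eq_comm]

lemma emb_injective (R : Type*) [CommRing R] : Function.Injective (emb R) := by
  intro f g h
  apply LaurentPolynomial.ext
  intro a
  rw [← coeff_emb, h, coeff_emb]

lemma finite_iff {R : Type*} [CommRing R] (x : LaurentSeries R) :
    x.support.Finite ↔ ∃ f, emb R f = x := by
  constructor
  · intro h
    refine ⟨⟨Finsupp.ofSupportFinite x.coeff h⟩, ?_⟩
    ext n
    rw [coeff_emb]
    rfl
  · rintro ⟨f, rfl⟩
    refine f.coeff.support.finite_toSet.subset ?_
    intro n hn
    simpa [coeff_emb] using hn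

lemma fw_iff {R : Type*} [CommRing R] {m : ℕ} (v : Fin m → LaurentSeries R) :
    FiniteWeight v ↔ ∃ f : Fin m → LaurentPolynomial R, ∀ i, emb R (f i) = v i := by
  unfold FiniteWeight
  simp only [finite_iff]
  exact Classical.skolem

lemma emb_toLaurent {R : Type*} [CommRing R] (f : Polynomial R) :
    emb R (Polynomial.toLaurent f) = polyToLS R f := by
  have : (emb R).comp Polynomial.toLaurent = polyToLS R := by
    apply Polynomial.ringHom_ext
    · intro a
      simp [emb, polyToLS]
    · simp [emb, polyToLS]
  exact RingHom.congr_fun this f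

/-- Coefficientwise reduction of Laurent polynomials. -/
noncomputable def red {R F : Type*} [CommRing R] [Field F] (φ : R →+* F) :
    LaurentPolynomial R →+* LaurentPolynomial F :=
  AddMonoidAlgebra.mapRingHom ℤ φ

lemma coeff_red {R F : Type*} [CommRing R] [Field F] (φ : R →+* F) (f : LaurentPolynomial R)
    (n : ℤ) : (red φ f).coeff n = φ (f.coeff n) :=
  AddMonoidAlgebra.coeff_mapRingHom _ _ _

/-- Scalar multiplication by constants. -/
lemma coeff_C_mul {R : Type*} [CommRing R] (a : R) (f : LaurentPolynomial R) (n : ℤ) :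
    (LaurentPolynomial.C a * f).coeff n = a * f.coeff n := by
  rw [← LaurentPolynomial.smul_eq_C_mul]; rfl

/-- choose coefficientwise preimages -/
lemma lift_coeff {R F : Type*} [CommRing R] [CommRing F] (f : LaurentPolynomial F)
    (P : F → R → Prop) (h0 : P 0 0) (h : ∀ n, ∃ y, P (f.coeff n) y) :
    ∃ g : LaurentPolynomial R, ∀ n, P (f.coeff n) (g.coeff n) := by
  classical
  choose c hc using h
  refine ⟨⟨Finsupp.onFinset f.coeff.support (fun n => if f.coeff n = 0 then 0 else c n) ?_⟩, ?_⟩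
  · intro n hn
    by_contra h
    simp at h
    simp [h] at hn
  · intro n
    change P _ (if f.coeff n = 0 then 0 else c n)
    split_ifs with h
    · rw [h]; exact h0
    · exact hc n

lemma red_surjective {R F : Type*} [CommRing R] [Field F] {φ : R →+* F} {p : R} {s : ℕ}
    (h : Chain φ p s) : Function.Surjective (red φ) := by
  intro f
  obtain ⟨g, hg⟩ := lift_coeff f (fun a b => φ b = a) (by simp) (fun n => h.surj _)
  exact ⟨g, LaurentPolynomial.ext fun n => by rw [coeff_red, hg]⟩

lemma red_ker {R F : Type*} [CommRing R] [Field F] {φ : R →+* F} {p : R} {s : ℕ}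
    (h : Chain φ p s) (f : LaurentPolynomial R) (hf : red φ f = 0) :
    ∃ g, f = LaurentPolynomial.C p * g := by
  obtain ⟨g, hg⟩ := lift_coeff f (fun a b => a = p * b) (by simp)
    (fun n => h.ker _ (by rw [← coeff_red, hf]; rfl))
  exact ⟨g, LaurentPolynomial.ext fun n => by rw [coeff_C_mul, hg]⟩

lemma laurent_ann_p {R F : Type*} [CommRing R] [Field F] {φ : R →+* F} {p : R} {s : ℕ}
    (h : Chain φ p s) (f : LaurentPolynomial R) (hf : LaurentPolynomial.C p * f = 0) :
    ∃ g, f = LaurentPolynomial.C (p ^ s) * g := by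
  obtain ⟨g, hg⟩ := lift_coeff f (fun a b => a = p ^ s * b) (by simp)
    (fun n => h.ann_p _ (by rw [← coeff_C_mul, hf]; rfl))
  exact ⟨g, LaurentPolynomial.ext fun n => by rw [coeff_C_mul, hg]⟩

lemma laurent_ann_pow {R F : Type*} [CommRing R] [Field F] {φ : R →+* F} {p : R} {s : ℕ}
    (h : Chain φ p s) (f : LaurentPolynomial R) (hf : LaurentPolynomial.C (p ^ s) * f = 0) :
    red φ f = 0 := by
  apply LaurentPolynomial.ext
  intro n
  rw [coeff_red, h.ann_pow _ (by rw [← coeff_C_mul, hf]; rfl)]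
  rfl

/-- Reduction of Laurent polynomials reflects units. -/
lemma red_isUnit {R F : Type*} [CommRing R] [Field F] {φ : R →+* F} {p : R} {s : ℕ}
    (h : Chain φ p s) (f : LaurentPolynomial R) (hf : IsUnit (red φ f)) : IsUnit f := by
  obtain ⟨b, hb⟩ := hf.exists_right_inv
  obtain ⟨g, rfl⟩ := red_surjective h b
  obtain ⟨z, hz⟩ := red_ker h (f * g - 1) (by simp [hb])
  have h1 : IsNilpotent (f * g - 1) :=
    ⟨s + 1, by rw [hz, mul_pow, ← map_pow, h.pow_zero, map_zero, zero_mul]⟩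
  have h2 : IsUnit (f * g) := by
    have := IsNilpotent.isUnit_add_left_of_commute h1 isUnit_one (Commute.all _ _)
    simpa using this
  exact isUnit_of_mul_isUnit_left h2

/-- A Laurent series with a coefficient that is nonzero modulo `p` is a unit. -/
lemma series_isUnit {R F : Type*} [CommRing R] [Field F] {φ : R →+* F} {p : R} {s : ℕ}
    (h : Chain φ p s) (x : LaurentSeries R) (n : ℤ) (hn : φ (x.coeff n) ≠ 0) : IsUnit x := by
  classical
  have : Nontrivial R := φ.domain_nontrivial
  choose c hc using h.ker
  let a : LaurentSeries R := ⟨fun m => if φ (x.coeff m) = 0 then 0 else x.coeff m,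
    x.isPWO_support'.mono (by
      intro m hm hm'
      apply hm
      simp only [hm', ite_self])⟩
  let b : LaurentSeries R := ⟨fun m => if hx : φ (x.coeff m) = 0 then
      (if x.coeff m = 0 then 0 else c _ hx) else 0,
    x.isPWO_support'.mono (by
      intro m hm hm'
      apply hm
      simp [hm'])⟩
  have hab : x = a + HahnSeries.C p * b := by
    ext m
    rw [HahnSeries.coeff_add, HahnSeries.C_mul_eq_smul, HahnSeries.coeff_smul]
    simp only [a, b, smul_eq_mul]
    by_cases h1 : φ (x.coeff m) = 0
    · by_cases h2 : x.coeff m = 0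
      · simp [h2]
      · simp only [h1, h2, if_true, if_false, dif_pos, zero_add]
        exact hc _ h1
    · simp [h1]
  have ha : a ≠ 0 := by
    intro h0
    have : a.coeff n = 0 := by rw [h0]; rfl
    simp only [a, hn, if_false] at this
    exact hn (by rw [this, map_zero])
  have hl : a.leadingCoeff ≠ 0 := HahnSeries.leadingCoeff_ne_zero.mpr ha
  have hua : IsUnit a := by
    apply HahnSeries.isUnit_of_isUnit_leadingCoeff_AddUnitOrder
    · rw [HahnSeries.leadingCoeff_eq] at hl ⊢
      apply h.isUnit
      intro h0
      apply hl
      generalize a.order = m at h0 ⊢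
      change (if φ (x.coeff m) = 0 then 0 else x.coeff m) = 0
      change φ (if φ (x.coeff m) = 0 then 0 else x.coeff m) = 0 at h0
      by_cases h1 : φ (x.coeff m) = 0
      · rw [if_pos h1]
      · rw [if_neg h1] at h0
        exact absurd h0 h1
    · exact AddGroup.isAddUnit _
  rw [hab]
  refine IsNilpotent.isUnit_add_left_of_commute ⟨s + 1, ?_⟩ hua (Commute.all _ _)
  rw [mul_pow, ← map_pow, h.pow_zero, map_zero, zero_mul]

lemma emb_isUnit {R F : Type*} [CommRing R] [Field F] {φ : R →+* F} {p : R} {s : ℕ}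
    (h : Chain φ p s) (f : LaurentPolynomial R) (hf : red φ f ≠ 0) : IsUnit (emb R f) := by
  by_contra hu
  apply hf
  apply LaurentPolynomial.ext
  intro n
  by_contra hn
  exact hu (series_isUnit h _ n (by rw [coeff_emb, ← coeff_red]; exact hn))

/-- Nonzerodivisor criterion for polynomials. -/
lemma nzd_iff {R F : Type*} [CommRing R] [Field F] {φ : R →+* F} {p : R} {s : ℕ}
    (h : Chain φ p s) (f : Polynomial R) :
    f ∈ nonZeroDivisors (Polynomial R) ↔ f.map φ ≠ 0 := by
  rw [← not_iff_not, Polynomial.notMem_nonZeroDivisors_iff, not_not]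
  constructor
  · rintro ⟨a, ha, haf⟩
    ext n
    rw [coeff_map, coeff_zero]
    by_contra hn
    apply ha
    have h2 : a * f.coeff n = 0 := by
      have := congrArg (fun g => g.coeff n) haf
      simpa using this
    exact (h.isUnit _ hn).mul_left_eq_zero.mp h2
  · intro hf
    refine ⟨p ^ s, h.pow_ne, ?_⟩
    ext n
    obtain ⟨y, hy⟩ := h.ker (f.coeff n) (by rw [← coeff_map, hf, coeff_zero])
    rw [coeff_smul, hy, smul_eq_mul, ← mul_assoc, ← pow_succ, h.pow_zero, zero_mul, coeff_zero]

lemma red_toLaurent {R F : Type*} [CommRing R] [Field F] (φ : R →+* F) (f : Polynomial R) :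
    red φ (Polynomial.toLaurent f) = Polynomial.toLaurent (f.map φ) := by
  have : (red φ).comp Polynomial.toLaurent = Polynomial.toLaurent.comp (Polynomial.mapRingHom φ) := by
    apply Polynomial.ringHom_ext
    · intro a
      apply LaurentPolynomial.ext
      intro n
      simp only [RingHom.comp_apply, coeff_red, Polynomial.toLaurent_C, Polynomial.coe_mapRingHom,
        Polynomial.map_C, LaurentPolynomial.C_apply]
      split_ifs <;> simp
    · apply LaurentPolynomial.ext
      intro n
      simp only [RingHom.comp_apply, coeff_red, Polynomial.toLaurent_X, Polynomial.coe_mapRingHom,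
        Polynomial.map_X, LaurentPolynomial.T_apply]
      split_ifs <;> simp
  exact RingHom.congr_fun this f

lemma nzd_isUnit {R F : Type*} [CommRing R] [Field F] {φ : R →+* F} {p : R} {s : ℕ}
    (h : Chain φ p s) (f : Polynomial R) (hf : f ∈ nonZeroDivisors (Polynomial R)) :
    IsUnit (polyToLS R f) := by
  rw [← emb_toLaurent]
  apply emb_isUnit h
  rw [red_toLaurent]
  exact Polynomial.toLaurent_ne_zero.mpr ((nzd_iff h f).mp hf)

instance laurent_pid (F : Type*) [Field F] : IsPrincipalIdealRing (LaurentPolynomial F) := by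
  refine ⟨fun J => ?_⟩
  rw [← IsLocalization.map_under (Submonoid.powers (X : Polynomial F)) (LaurentPolynomial F) J]
  obtain ⟨g, hg⟩ := (IsPrincipalIdealRing.principal (Ideal.under (Polynomial F) J))
  rw [hg, ← Ideal.span, Ideal.map_span, Set.image_singleton]
  exact ⟨_, rfl⟩

/-! ### Surjectivity over the Laurent polynomials of the residue field -/

lemma exists_functional {B : Type*} [CommRing B] {k n : ℕ} (M : Matrix (Fin k) (Fin n) B)
    (h : ¬ Function.Surjective M.mulVecLin) :
    ∃ (I : Ideal B) (w : Fin k → B), I.IsMaximal ∧ (∃ i, w i ∉ I) ∧ ∀ j, (w ᵥ* M) j ∈ I := by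
  rw [← LinearMap.range_eq_top] at h
  obtain ⟨N, hN, hle⟩ := (eq_top_or_exists_le_coatom (LinearMap.range M.mulVecLin)).resolve_left h
  obtain ⟨I, hI, ⟨e⟩⟩ := isSimpleModule_iff_quot_maximal.mp (isSimpleModule_iff_isCoatom.mpr hN)
  let ψ : (Fin k → B) →ₗ[B] B ⧸ I := e.toLinearMap ∘ₗ N.mkQ
  have hψ : ∀ x ∈ N, ψ x = 0 := fun x hx => by simp [ψ, hx]
  choose w hw using fun i => Ideal.Quotient.mk_surjective (I := I) (ψ (Pi.single i 1))
  have key : ∀ x, ψ x = Ideal.Quotient.mk I (∑ i, w i * x i) := by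
    intro x
    rw [LinearMap.pi_apply_eq_sum_univ ψ x, map_sum]
    refine Finset.sum_congr rfl fun i _ => ?_
    rw [mul_comm, map_mul, hw]
    have : (fun j => if i = j then (1 : B) else 0) = Pi.single i 1 := by
      ext j; simp [Pi.single_apply, eq_comm]
    rw [this]
    rfl
  refine ⟨I, w, hI, ?_, ?_⟩
  · by_contra hcon
    push Not at hcon
    apply hN.1
    rw [eq_top_iff]
    intro x _
    have h0 : ψ x = 0 := by
      rw [key, Ideal.Quotient.eq_zero_iff_mem]
      exact I.sum_mem fun i _ => I.mul_mem_right _ (hcon i)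
    have h1 : N.mkQ x = 0 := by
      apply e.injective
      rw [map_zero]
      exact h0
    simpa using h1
  · intro j
    rw [← Ideal.Quotient.eq_zero_iff_mem]
    have h1 := key (M.mulVecLin (Pi.single j 1))
    rw [hψ _ (hle ⟨_, rfl⟩)] at h1
    rw [h1]
    simp [Matrix.vecMul, dotProduct]

/-- For a maximal ideal there is a suitable fraction. -/
lemma exists_fraction {R F : Type*} [CommRing R] [Field F] {φ : R →+* F} {p : R} {s : ℕ}
    (h : Chain φ p s) (I : Ideal (LaurentPolynomial F)) (hI : I.IsMaximal) :
    ∃ y : LaurentSeries R,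
      (∀ f, red φ f ∈ I → ∃ g, emb R g = HahnSeries.C (p ^ s) * y * emb R f) ∧
      ¬ ∃ g, emb R g = HahnSeries.C (p ^ s) * y := by
  have hC : ∀ a : R, HahnSeries.C a = emb R (LaurentPolynomial.C a) := by
    intro a; simp [emb]
  have hker : ∀ f, red φ f = 0 → LaurentPolynomial.C (p ^ s) * f = 0 := by
    intro f hf
    obtain ⟨g, rfl⟩ := red_ker h f hf
    rw [← mul_assoc, ← map_mul, ← pow_succ, h.pow_zero, map_zero, zero_mul]
  obtain ⟨q, hq⟩ := (IsPrincipalIdealRing.principal I)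
  obtain ⟨q', rfl⟩ := red_surjective h q
  by_cases h0 : red φ q' = 0
  · refine ⟨HahnSeries.ofPowerSeries ℤ R (PowerSeries.mk fun _ => 1), ?_, ?_⟩
    · intro f hf
      rw [hq, h0] at hf
      have hf : red φ f = 0 := by simpa using hf
      refine ⟨0, ?_⟩
      rw [mul_right_comm, hC, ← map_mul, hker f hf]
      simp
    · rw [← finite_iff]
      intro hfin
      apply (Set.infinite_range_of_injective (Nat.cast_injective (R := ℤ))).mono ?_ hfin
      rintro _ ⟨n, rfl⟩
      rw [HahnSeries.mem_support, HahnSeries.C_mul_eq_smul, HahnSeries.coeff_smul]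
      have : ((HahnSeries.ofPowerSeries ℤ R) (PowerSeries.mk fun _ => 1)).coeff (n : ℤ) = 1 := by
        simp [HahnSeries.ofPowerSeries_apply_coeff]
      rw [this, smul_eq_mul, mul_one]
      exact h.pow_ne
  · obtain ⟨y, hy⟩ := (emb_isUnit h q' h0).exists_right_inv
    refine ⟨y, ?_, ?_⟩
    · intro f hf
      rw [hq, Submodule.mem_span_singleton] at hf
      obtain ⟨a, ha⟩ := hf
      obtain ⟨a, rfl⟩ := red_surjective h a
      have h1 := hker (f - a * q') (by rw [map_sub, map_mul, ← ha, smul_eq_mul, sub_self])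
      refine ⟨LaurentPolynomial.C (p ^ s) * a, ?_⟩
      have h2 : LaurentPolynomial.C (p ^ s) * f = LaurentPolynomial.C (p ^ s) * a * q' := by
        linear_combination h1
      rw [mul_right_comm, hC, ← map_mul, h2, map_mul _ _ q', mul_assoc, hy, mul_one]
    · rintro ⟨g, hg⟩
      have h1 : LaurentPolynomial.C (p ^ s) = q' * g := by
        apply emb_injective
        rw [map_mul, hg, hC]
        linear_combination (-emb R (LaurentPolynomial.C (p ^ s))) * hy
      have h2 : LaurentPolynomial.C p * g = 0 := by
        apply emb_injective
        rw [map_zero, ← (emb_isUnit h q' h0).mul_right_eq_zero, ← map_mul]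
        have : q' * (LaurentPolynomial.C p * g) = 0 := by
          rw [mul_left_comm, ← h1, ← map_mul, ← pow_succ', h.pow_zero, map_zero]
        rw [this, map_zero]
      obtain ⟨g', rfl⟩ := laurent_ann_p h g h2
      have h3 := laurent_ann_pow h (1 - q' * g') (by linear_combination h1)
      rw [map_sub, map_one, map_mul, sub_eq_zero] at h3
      apply hI.ne_top
      rw [hq]
      exact Ideal.span_singleton_eq_top.mpr (IsUnit.of_mul_eq_one _ h3.symm)

lemma surj_of_noncat {R F : Type*} [CommRing R] [Field F] {φ : R →+* F} {p : R} {s : ℕ}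
    (h : Chain φ p s) {k n : ℕ} (M : Matrix (Fin k) (Fin n) (LaurentPolynomial R))
    (hM : ∀ u : Fin k → LaurentSeries R,
      FiniteWeight (u ᵥ* M.map (emb R)) → FiniteWeight u) :
    Function.Surjective (M.map (red φ)).mulVecLin := by
  by_contra hns
  obtain ⟨I, w, hI, ⟨i, hi⟩, hw⟩ := exists_functional _ hns
  choose w' hw' using fun i => red_surjective h (w i)
  obtain ⟨y, hy1, hy2⟩ := exists_fraction h I hI
  set x := HahnSeries.C (p ^ s) * y with hx
  have hfin : FiniteWeight (fun i => x * emb R (w' i)) := by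
    apply hM
    intro j
    rw [finite_iff]
    obtain ⟨g, hg⟩ := hy1 ((w' ᵥ* M) j) (by
      rw [RingHom.map_vecMul, show ⇑(red φ) ∘ w' = w from funext hw']
      exact hw j)
    refine ⟨g, hg.trans ?_⟩
    rw [RingHom.map_vecMul]
    simp only [Matrix.vecMul, dotProduct, Finset.mul_sum, mul_assoc, Function.comp]
  obtain ⟨g, hg⟩ := (finite_iff _).mp (hfin i)
  -- `w i` is invertible modulo `I`
  obtain ⟨c, hc⟩ := hI.exists_inv hi
  obtain ⟨m, hm, hcm⟩ := hc
  obtain ⟨c', rfl⟩ := red_surjective h c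
  obtain ⟨g2, hg2⟩ := hy1 (1 - c' * w' i) (by
    rw [map_sub, map_mul, map_one, hw', ← hcm]
    simpa using hm)
  apply hy2
  refine ⟨g2 + c' * g, ?_⟩
  rw [map_add, map_mul, hg, hg2, map_sub, map_mul, map_one]
  ring

/-! ### Completion to unimodular matrices -/

lemma complete_pid {B : Type*} [CommRing B] [IsDomain B] [IsPrincipalIdealRing B] {k n : ℕ}
    (M : Matrix (Fin k) (Fin n) B) (h : Function.Surjective M.mulVecLin) :
    ∃ (m : ℕ) (M' : Matrix (Fin m) (Fin n) B) (V : Matrix (Fin n) (Fin k ⊕ Fin m) B),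
      fromRows M M' * V = 1 ∧ V * fromRows M M' = 1 := by
  classical
  obtain ⟨m, ⟨b⟩⟩ := Submodule.nonempty_basis_of_pid (Pi.basisFun B (Fin n))
    (LinearMap.ker M.mulVecLin)
  obtain ⟨σ, hσ⟩ := LinearMap.exists_rightInverse_of_surjective M.mulVecLin
    (LinearMap.range_eq_top.mpr h)
  have hσ' : ∀ x, M *ᵥ (σ x) = x := fun x => LinearMap.congr_fun hσ x
  -- projection to the kernel
  let P : (Fin n → B) →ₗ[B] LinearMap.ker M.mulVecLin :=
    LinearMap.codRestrict _ (LinearMap.id - σ ∘ₗ M.mulVecLin) (by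
      intro x
      simp only [LinearMap.mem_ker, LinearMap.sub_apply, LinearMap.id_apply, LinearMap.comp_apply,
        map_sub, Matrix.mulVecLin_apply, hσ', sub_self])
  let Q : (Fin n → B) →ₗ[B] (Fin m → B) := b.equivFun.toLinearMap ∘ₗ P
  let S : (Fin m → B) →ₗ[B] (Fin n → B) :=
    (LinearMap.ker M.mulVecLin).subtype ∘ₗ b.equivFun.symm.toLinearMap
  have hMS : M.mulVecLin ∘ₗ S = 0 := by
    ext x : 1
    apply LinearMap.ext
    intro y
    simp only [LinearMap.comp_apply, S]
    exact (b.equivFun.symm _).2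
  have hSQ : S ∘ₗ Q = LinearMap.id - σ ∘ₗ M.mulVecLin := by
    apply LinearMap.ext
    intro y
    have : S (Q y) = ((P y : LinearMap.ker M.mulVecLin) : Fin n → B) := by simp [S, Q]
    rw [LinearMap.comp_apply, this]
    rfl
  have hSinj : Function.Injective S := by
    intro x y hxy
    exact b.equivFun.symm.injective (Subtype.ext hxy)
  have hQS : Q ∘ₗ S = LinearMap.id := by
    apply LinearMap.ext
    intro y
    apply hSinj
    have := LinearMap.congr_fun hSQ (S y)
    have h2 := LinearMap.congr_fun hMS y
    simp only [LinearMap.comp_apply, LinearMap.sub_apply, LinearMap.id_apply] at this h2 ⊢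
    rw [this, h2]; simp
  have hQσ : Q ∘ₗ σ = 0 := by
    apply LinearMap.ext
    intro y
    apply hSinj
    have := LinearMap.congr_fun hSQ (σ y)
    simp only [LinearMap.comp_apply, LinearMap.sub_apply, LinearMap.id_apply,
      Matrix.mulVecLin_apply, hσ'] at this ⊢
    rw [this]; simp
  have hM : LinearMap.toMatrix' M.mulVecLin = M := by rw [← Matrix.toLin'_apply', LinearMap.toMatrix'_toLin']
  refine ⟨m, LinearMap.toMatrix' Q, fromCols (LinearMap.toMatrix' σ) (LinearMap.toMatrix' S), ?_, ?_⟩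
  · rw [fromRows_mul_fromCols, ← fromBlocks_one]
    nth_rewrite 1 [← hM]
    nth_rewrite 2 [← hM]
    rw [← LinearMap.toMatrix'_comp, ← LinearMap.toMatrix'_comp, ← LinearMap.toMatrix'_comp,
      ← LinearMap.toMatrix'_comp, hσ, hMS, hQS, hQσ]
    simp
  · rw [fromCols_mul_fromRows]
    nth_rewrite 1 [← hM]
    rw [← LinearMap.toMatrix'_comp, ← LinearMap.toMatrix'_comp, hSQ]
    simp

lemma isUnit_of_red {R F : Type*} [CommRing R] [Field F] {φ : R →+* F} {p : R} {s : ℕ}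
    (h : Chain φ p s) {ι : Type*} [Fintype ι] [DecidableEq ι]
    (M : Matrix ι ι (LaurentPolynomial R)) (hM : M.map (red φ) = 1) : IsUnit M := by
  rw [Matrix.isUnit_iff_isUnit_det]
  apply red_isUnit h
  rw [RingHom.map_det, RingHom.mapMatrix_apply, hM]
  simp

lemma complete_lift {R F : Type*} [CommRing R] [Field F] {φ : R →+* F} {p : R} {s : ℕ}
    (h : Chain φ p s) {k n : ℕ} (M : Matrix (Fin k) (Fin n) (LaurentPolynomial R))
    (hM : Function.Surjective (M.map (red φ)).mulVecLin) :
    ∃ (m : ℕ) (M' : Matrix (Fin m) (Fin n) (LaurentPolynomial R))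
      (N : Matrix (Fin n) (Fin k) (LaurentPolynomial R))
      (N' : Matrix (Fin n) (Fin m) (LaurentPolynomial R)),
      M * N' = 0 ∧ M' * N' = 1 ∧ N * M + N' * M' = 1 := by
  classical
  obtain ⟨m, M', V, h1, h2⟩ := complete_pid _ hM
  choose f hf using red_surjective h
  let M₁ := M'.map f
  let V₁ := V.map f
  have hU : (fromRows M M₁).map (red φ) = fromRows (M.map (red φ)) M' := by
    ext i j
    rcases i with i | i <;> simp [M₁, hf]
  have hV : V₁.map (red φ) = V := by
    ext i j; simp [V₁, hf]
  have u1 : IsUnit (fromRows M M₁ * V₁) := by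
    apply isUnit_of_red h
    rw [Matrix.map_mul, hU, hV, h1]
  have u2 : IsUnit (V₁ * fromRows M M₁) := by
    apply isUnit_of_red h
    rw [Matrix.map_mul, hU, hV, h2]
  obtain ⟨W1, hW1⟩ := u1.exists_right_inv
  obtain ⟨W2, hW2⟩ := u2.exists_left_inv
  set U := fromRows M M₁
  have e1 : U * (V₁ * W1) = 1 := by rw [← Matrix.mul_assoc, hW1]
  have e2 : (W2 * V₁) * U = 1 := by rw [Matrix.mul_assoc, hW2]
  have e3 : W2 * V₁ = V₁ * W1 := by
    calc W2 * V₁ = W2 * V₁ * (U * (V₁ * W1)) := by rw [e1, Matrix.mul_one]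
      _ = (W2 * V₁ * U) * (V₁ * W1) := by simp only [Matrix.mul_assoc]
      _ = _ := by rw [e2, Matrix.one_mul]
  rw [e3] at e2
  refine ⟨m, M₁, (V₁ * W1).toCols₁, (V₁ * W1).toCols₂, ?_⟩
  rw [← fromCols_toCols (V₁ * W1)] at e1 e2
  rw [fromRows_mul_fromCols, ← fromBlocks_one, fromBlocks_inj] at e1
  rw [fromCols_mul_fromRows] at e2
  exact ⟨e1.2.1, e1.2.2.2, e2⟩

lemma det_mul_eq_zero {B : Type*} [CommRing B] {m n : ℕ} (M : Matrix (Fin m) (Fin n) B)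
    (N : Matrix (Fin n) (Fin m) B) (h : ∀ c : Fin m → Fin n, (M.submatrix id c).det = 0) :
    (M * N).det = 0 := by
  classical
  rw [← Matrix.det_transpose]
  have : (M * N)ᵀ = fun i => ∑ j, N j i • Mᵀ j := by
    ext i l
    simp [Matrix.mul_apply, Finset.sum_apply, mul_comm]
  rw [this]
  change (Matrix.detRowAlternating (R := B)).toMultilinearMap (fun i => ∑ j, N j i • Mᵀ j) = 0
  rw [MultilinearMap.map_sum]
  refine Finset.sum_eq_zero fun c _ => ?_
  rw [MultilinearMap.map_smul_univ]
  have h2 := h c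
  rw [← Matrix.det_transpose] at h2
  have h3 : (Matrix.detRowAlternating (R := B)).toMultilinearMap (fun i => Mᵀ (c i)) = 0 := h2
  rw [h3, smul_zero]

lemma exists_common_pow {R : Type*} [CommRing R] {m n : ℕ}
    (N : Matrix (Fin n) (Fin m) (LaurentPolynomial R)) :
    ∃ (e : ℕ) (K : Matrix (Fin m) (Fin n) (Polynomial R)),
      K.map Polynomial.toLaurent = (LaurentPolynomial.T (e : ℤ) : LaurentPolynomial R) • Nᵀ := by
  choose e f hf using fun i j => LaurentPolynomial.exists_T_pow (N i j)
  let E := ∑ i, ∑ j, e i j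
  have hE : ∀ i j, e i j ≤ E := fun i j =>
    (Finset.single_le_sum (f := fun j => e i j) (fun _ _ => Nat.zero_le _) (Finset.mem_univ j)).trans
    (Finset.single_le_sum (f := fun i => ∑ j, e i j) (fun _ _ => Nat.zero_le _) (Finset.mem_univ i))
  refine ⟨E, Matrix.of fun i j => f j i * X ^ (E - e j i), ?_⟩
  ext1 i j
  rw [Matrix.map_apply, Matrix.of_apply, map_mul, hf, Polynomial.toLaurent_X_pow, LaurentPolynomial.mul_T_assoc,
    Matrix.smul_apply, Matrix.transpose_apply, smul_eq_mul, mul_comm]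
  congr 2
  have := hE j i
  omega

/-- The key construction: a noncatastrophic encoder yields one for the dual code. -/
lemma dual_noncat {R F : Type*} [CommRing R] [Field F] {φ : R →+* F} {p : R} {s : ℕ}
    (h : Chain φ p s) {k n : ℕ} (G : Matrix (Fin k) (Fin n) (Polynomial R))
    (hG : NonCatastrophic G) :
    ∃ (m : ℕ) (K : Matrix (Fin m) (Fin n) (Polynomial R)),
      FullRowRank K ∧ code K = dualCode (code G) ∧ NonCatastrophic K := by
  classical
  have hmap : ∀ {a b : ℕ} (M : Matrix (Fin a) (Fin b) (Polynomial R)),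
      M.map (polyToLS R) = (M.map Polynomial.toLaurent).map (emb R) := by
    intro a b M
    ext1 i j
    simp only [Matrix.map_apply, emb_toLaurent]
  obtain ⟨m, M', N, N', h1, h2, h3⟩ := complete_lift h (G.map Polynomial.toLaurent)
    (surj_of_noncat h _ (by
      intro u hu
      rw [← hmap] at hu
      exact hG u hu))
  obtain ⟨e, K, hK⟩ := exists_common_pow N'
  set t : LaurentPolynomial R := LaurentPolynomial.T (e : ℤ) with ht
  set t' : LaurentPolynomial R := LaurentPolynomial.T (-(e : ℤ)) with ht'
  have htt : t * t' = 1 := by rw [ht, ht', ← LaurentPolynomial.T_add]; simp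
  have hKM : K.map Polynomial.toLaurent * M'ᵀ = t • (1 : Matrix (Fin m) (Fin m) _) := by
    rw [hK, Matrix.smul_mul, ← Matrix.transpose_mul, h2, Matrix.transpose_one]
  have hGK : G.map Polynomial.toLaurent * (K.map Polynomial.toLaurent)ᵀ = 0 := by
    rw [hK, Matrix.transpose_smul, Matrix.transpose_transpose, Matrix.mul_smul, h1, smul_zero]
  have hsum : N * G.map Polynomial.toLaurent + t' • ((K.map Polynomial.toLaurent)ᵀ * M') = 1 := by
    rw [hK, Matrix.transpose_smul, Matrix.transpose_transpose, Matrix.smul_mul, smul_smul,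
      mul_comm t', htt, one_smul, h3]
  have hKinv : K.map Polynomial.toLaurent * (t' • M'ᵀ) = 1 := by
    rw [Matrix.mul_smul, hKM, smul_smul, mul_comm t', htt, one_smul]
  refine ⟨m, K, ?_, ?_, ?_⟩
  · by_contra hcon
    unfold FullRowRank at hcon
    push Not at hcon
    have hz : ∀ c : Fin m → Fin n,
        (((K.map Polynomial.toLaurent).map (red φ)).submatrix id c).det = 0 := by
      intro c
      have hc := hcon c
      rw [nzd_iff h, not_not] at hc
      have : ((K.map Polynomial.toLaurent).map (red φ)).submatrix id c =
          ((red φ).comp Polynomial.toLaurent).mapMatrix (K.submatrix id c) := by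
        ext1 i j; rfl
      rw [this, ← RingHom.map_det, RingHom.comp_apply, red_toLaurent]
      change Polynomial.toLaurent ((minorOn K c).map φ) = 0
      rw [hc, map_zero]
    have := det_mul_eq_zero _ ((t' • M'ᵀ).map (red φ)) hz
    rw [← Matrix.map_mul, hKinv, Matrix.map_one _ (map_zero _) (map_one _), Matrix.det_one] at this
    exact one_ne_zero this
  · ext v
    have hL : ∀ {a b c : ℕ} (X : Matrix (Fin a) (Fin b) (LaurentPolynomial R))
        (Y : Matrix (Fin b) (Fin c) (LaurentPolynomial R)),
        X.map (emb R) * Y.map (emb R) = (X * Y).map (emb R) := fun X Y => Matrix.map_mul.symm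
    constructor
    · rintro ⟨u, rfl⟩ w ⟨u', rfl⟩
      change (u ᵥ* K.map (polyToLS R)) ⬝ᵥ (u' ᵥ* G.map (polyToLS R)) = 0
      rw [dotProduct_comm, ← Matrix.dotProduct_mulVec, ← Matrix.mulVec_transpose, Matrix.mulVec_mulVec,
        hmap, hmap, ← Matrix.transpose_map, hL, hGK]
      simp
    · intro hv
      have hGv : G.map (polyToLS R) *ᵥ v = 0 := by
        ext1 i
        have := hv _ ⟨Pi.single i 1, rfl⟩
        rw [Matrix.single_one_vecMul] at this
        simpa [Matrix.mulVec, dotProduct, mul_comm] using this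
      have e1 : v = (1 : Matrix (Fin n) (Fin n) (LaurentPolynomial R)).map (emb R) *ᵥ v := by
        rw [Matrix.map_one _ (map_zero _) (map_one _), Matrix.one_mulVec]
      have e2 : (t' • ((K.map Polynomial.toLaurent)ᵀ * M')) =
          (K.map Polynomial.toLaurent)ᵀ * (t' • M') := by rw [Matrix.mul_smul]
      refine ⟨(t' • M').map (emb R) *ᵥ v, ?_⟩
      rw [← Matrix.mulVec_transpose, hmap K, Matrix.mulVec_mulVec, ← Matrix.transpose_map, hL, ← e2]
      have e3 : (N * G.map Polynomial.toLaurent).map (emb R) *ᵥ v = 0 := by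
        rw [← hL, ← hmap, ← Matrix.mulVec_mulVec, hGv, Matrix.mulVec_zero]
      conv_lhs => rw [e1, ← hsum, Matrix.map_add _ (map_add _), Matrix.add_mulVec, e3, zero_add]
  · intro u hu
    obtain ⟨f, hf⟩ := (fw_iff _).mp hu
    rw [fw_iff]
    refine ⟨f ᵥ* (t' • M'ᵀ), fun i => ?_⟩
    rw [RingHom.map_vecMul, show ⇑(emb R) ∘ f = _ from funext hf, hmap, Matrix.vecMul_vecMul,
      ← Matrix.map_mul, hKinv, Matrix.map_one _ (map_zero _) (map_one _), Matrix.vecMul_one]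

lemma dual_dual {R F : Type*} [CommRing R] [Field F] {φ : R →+* F} {p : R} {s : ℕ}
    (h : Chain φ p s) {k n : ℕ} (G : Matrix (Fin k) (Fin n) (Polynomial R))
    (hG : FullRowRank G) : dualCode (dualCode (code G)) = code G := by
  classical
  apply Set.Subset.antisymm
  · intro z hz
    obtain ⟨c, hc⟩ := hG
    set M := G.map (polyToLS R) with hM
    let E : Matrix (Fin n) (Fin k) (LaurentSeries R) := (1 : Matrix (Fin n) (Fin n) _).submatrix id c
    have hdet : IsUnit (M * E) := by
      rw [Matrix.isUnit_iff_isUnit_det]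
      have h1 : M * E = (polyToLS R).mapMatrix (G.submatrix id c) := by
        ext1 i j
        simp [E, Matrix.mul_apply, Matrix.one_apply, hM]
      rw [h1, ← RingHom.map_det]
      exact nzd_isUnit h _ hc
    obtain ⟨W, hW⟩ := hdet.exists_right_inv
    refine ⟨z ᵥ* (E * W), ?_⟩
    obtain ⟨P, hP⟩ : ∃ P : Matrix (Fin n) (Fin n) (LaurentSeries R), P = 1 - E * W * M := ⟨_, rfl⟩
    have hMP : M * P = 0 := by
      rw [hP, Matrix.mul_sub, ← Matrix.mul_assoc, ← Matrix.mul_assoc, hW, Matrix.mul_one,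
        Matrix.one_mul, sub_self]
    have hzP : z ᵥ* P = 0 := by
      ext1 j
      have := hz (fun i => P i j) (by
        rintro w ⟨u, rfl⟩
        change (fun i => P i j) ⬝ᵥ (u ᵥ* M) = 0
        rw [dotProduct_comm]
        change ((u ᵥ* M) ᵥ* P) j = 0
        rw [Matrix.vecMul_vecMul, hMP, Matrix.vecMul_zero]
        rfl)
      exact this
    rw [hP, Matrix.vecMul_sub, Matrix.vecMul_one, sub_eq_zero] at hzP
    rw [Matrix.vecMul_vecMul]
    exact hzP
  · intro w hw v hv
    have := hv w hw
    simpa [mul_comm] using this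

end CatDual

/-- A free convolutional code over `ℤ/p^r` is catastrophic iff its dual code is. -/
theorem catastrophic_iff_dual_catastrophic
    (p : ℕ) (hp : p.Prime) (r : ℕ) (hr : r ≠ 0) (k n : ℕ)
    (G : Matrix (Fin k) (Fin n) (Polynomial (ZMod (p ^ r))))
    (hG : FullRowRank G) :
    CatastrophicCode (code G) ↔ CatastrophicCode (dualCode (code G)) := by
  classical
  obtain ⟨s, rfl⟩ := Nat.exists_eq_succ_of_ne_zero hr
  have : Fact p.Prime := ⟨hp⟩
  have h := CatDual.chain_zmod p s
  constructor
  · intro hC m K hK hKC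
    by_contra hcon
    push Not at hcon
    obtain ⟨m', G', h1, h2, h3⟩ := CatDual.dual_noncat h K
      (fun u hu => by_contra fun hn => hcon u hn hu)
    rw [hKC, CatDual.dual_dual h G hG] at h2
    obtain ⟨u, hu, hu'⟩ := hC m' G' h1 h2
    exact hu (h3 u hu')
  · intro hC m K hK hKC
    by_contra hcon
    push Not at hcon
    obtain ⟨m', G', h1, h2, h3⟩ := CatDual.dual_noncat h K
      (fun u hu => by_contra fun hn => hcon u hn hu)
    rw [hKC] at h2
    obtain ⟨u, hu, hu'⟩ := hC m' G' h1 h2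
    exact hu (h3 u hu')
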